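/- arXiv:2102.06555 — 2 statements merged into one kernel-verified Lean document; each statement's English description precedes it below -/
import Mathlib

section
/- Let C̄_1, …, C̄_S be symmetric matrices in ℝ^{N×N}, let h ∈ Σ_N, D_h = diag(h), and w⁽¹⁾, w⁽²⁾ ∈ Σ_S. Write C̃(w) = ∑_{s=1}^S w_s C̄_s. Then for every coupling T ∈ U(h,h), the Gromov–Wasserstein objective between the two linear models equals E(C̃(w⁽¹⁾), C̃(w⁽²⁾), T) = ∑_{p,q} (w⁽¹⁾_p w⁽¹⁾_q + w⁽²⁾_p w⁽²⁾_q) ⟨D_h C̄_p, C̄_q D_h⟩_F − 2 ∑_{p,q} w⁽¹⁾_p w⁽²⁾_q ⟨Tᵀ C̄_p, C̄_q Tᵀ⟩_F. -/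
/-!
Expanding the square splits the objective as `E(C, 0, T) + E(0, D, T)` minus a cross term. The cross
term is a Frobenius product. In `E(C, 0, T)` the coupling enters only through its row sums, and
`E(0, D, T) = E(D, 0, Tᵀ)` reduces the column sums to the same computation. Bilinearity of the
Frobenius product then handles the linear models.
-/

open Matrix BigOperators Finset

/-- The probability simplex in `ℝ^n`. -/
def probSimplex (n : ℕ) : Set (Fin n → ℝ) :=
  {h | (∀ i, 0 ≤ h i) ∧ ∑ i, h i = 1}

/-- The set of couplings between two histograms. -/
def couplings {n m : ℕ} (h1 : Fin n → ℝ) (h2 : Fin m → ℝ) :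
    Set (Matrix (Fin n) (Fin m) ℝ) :=
  {T | (∀ i j, 0 ≤ T i j) ∧ (∀ i, ∑ j, T i j = h1 i) ∧ (∀ j, ∑ i, T i j = h2 j)}

/-- The Gromov–Wasserstein objective `E(C1, C2, T)`. -/
def gwObj {n m : ℕ} (C1 : Matrix (Fin n) (Fin n) ℝ) (C2 : Matrix (Fin m) (Fin m) ℝ)
    (T : Matrix (Fin n) (Fin m) ℝ) : ℝ :=
  ∑ i, ∑ j, ∑ k, ∑ l, (C1 i j - C2 k l) ^ 2 * T i k * T j l

/-- The squared Gromov–Wasserstein distance (minimum of the objective over couplings). -/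
noncomputable def GW2sq {n m : ℕ} (C1 : Matrix (Fin n) (Fin n) ℝ)
    (C2 : Matrix (Fin m) (Fin m) ℝ) (h1 : Fin n → ℝ) (h2 : Fin m → ℝ) : ℝ :=
  sInf (gwObj C1 C2 '' couplings h1 h2)

/-- Frobenius inner product `⟨A, B⟩_F = tr(Aᵀ B)`. -/
def frob {n m : ℕ} (A B : Matrix (Fin n) (Fin m) ℝ) : ℝ :=
  Matrix.trace (Aᵀ * B)

section Frobenius

variable {n m n' m' : ℕ}

theorem frob_eq_sum (A B : Matrix (Fin n) (Fin m) ℝ) :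
    frob A B = ∑ i, ∑ j, A i j * B i j := by
  simp only [frob, trace, diag_apply, mul_apply, transpose_apply]
  exact sum_comm

theorem frob_sum_smul_sum_smul {ι κ : Type*} [Fintype ι] [Fintype κ] (u : ι → ℝ) (v : κ → ℝ)
    (A : ι → Matrix (Fin n) (Fin m) ℝ) (B : κ → Matrix (Fin n) (Fin m) ℝ) :
    frob (∑ p, u p • A p) (∑ q, v q • B q) = ∑ p, ∑ q, u p * v q * frob (A p) (B q) := by
  simp only [frob, transpose_sum, transpose_smul, Matrix.sum_mul, Matrix.smul_mul]
  simp only [Matrix.mul_sum, Matrix.mul_smul, smul_sum, smul_smul, trace_sum, trace_smul,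
    smul_eq_mul]

theorem frob_mul_sum_smul_sum_smul_mul {ι κ : Type*} [Fintype ι] [Fintype κ]
    (L : Matrix (Fin n) (Fin n') ℝ) (R : Matrix (Fin m') (Fin m) ℝ) (u : ι → ℝ) (v : κ → ℝ)
    (A : ι → Matrix (Fin n') (Fin m) ℝ) (B : κ → Matrix (Fin n) (Fin m') ℝ) :
    frob (L * ∑ p, u p • A p) ((∑ q, v q • B q) * R) =
      ∑ p, ∑ q, u p * v q * frob (L * A p) (B q * R) := by
  simp only [Matrix.mul_sum, Matrix.sum_mul, Matrix.mul_smul, Matrix.smul_mul,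
    frob_sum_smul_sum_smul]

theorem frob_diagonal_mul_mul_diagonal (a : Fin n → ℝ) (b : Fin m → ℝ)
    (A B : Matrix (Fin n) (Fin m) ℝ) :
    frob (diagonal a * A) (B * diagonal b) = ∑ i, ∑ j, A i j * B i j * a i * b j := by
  simp only [frob_eq_sum, diagonal_mul, mul_diagonal]
  exact sum_congr rfl fun i _ ↦ sum_congr rfl fun j _ ↦ by ring

theorem frob_transpose_mul_mul_transpose (C : Matrix (Fin n) (Fin n') ℝ)
    (D : Matrix (Fin m) (Fin m') ℝ) (T : Matrix (Fin n) (Fin m) ℝ)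
    (U : Matrix (Fin n') (Fin m') ℝ) :
    frob (Tᵀ * C) (D * Uᵀ) = ∑ i, ∑ j, ∑ k, ∑ l, C i j * D k l * T i k * U j l := by
  calc frob (Tᵀ * C) (D * Uᵀ)
      = ∑ k, ∑ j, ∑ i, ∑ l, T i k * C i j * (D k l * U j l) := by
        simp only [frob_eq_sum, mul_apply, transpose_apply, sum_mul_sum]
    _ = ∑ i, ∑ j, ∑ k, ∑ l, T i k * C i j * (D k l * U j l) := by
        rw [sum_comm_cycle]
        exact sum_congr rfl fun i _ ↦ sum_comm
    _ = ∑ i, ∑ j, ∑ k, ∑ l, C i j * D k l * T i k * U j l :=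
        sum_congr rfl fun i _ ↦ sum_congr rfl fun j _ ↦ sum_congr rfl fun k _ ↦
          sum_congr rfl fun l _ ↦ by ring

end Frobenius

section Objective

variable {n m : ℕ} (C : Matrix (Fin n) (Fin n) ℝ) (D : Matrix (Fin m) (Fin m) ℝ)
  (T : Matrix (Fin n) (Fin m) ℝ) {a : Fin n → ℝ} {b : Fin m → ℝ}

theorem gwObj_transpose : gwObj D C Tᵀ = gwObj C D T := by
  calc gwObj D C Tᵀ
      = ∑ k, ∑ l, ∑ i, ∑ j, (C i j - D k l) ^ 2 * T i k * T j l := by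
        simp only [gwObj, transpose_apply, sub_sq_comm]
    _ = ∑ i, ∑ k, ∑ l, ∑ j, (C i j - D k l) ^ 2 * T i k * T j l := sum_comm_cycle
    _ = gwObj C D T := sum_congr rfl fun i _ ↦ sum_comm_cycle

theorem gwObj_zero_right (hrow : ∀ i, ∑ k, T i k = a i) :
    gwObj C 0 T = frob (diagonal a * C) (C * diagonal a) := by
  simp only [gwObj, Matrix.zero_apply, sub_zero, ← mul_sum, ← sum_mul, hrow,
    frob_diagonal_mul_mul_diagonal, sq]

theorem gwObj_zero_left (hcol : ∀ k, ∑ i, T i k = b k) :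
    gwObj 0 D T = frob (diagonal b * D) (D * diagonal b) := by
  rw [← gwObj_transpose, gwObj_zero_right D Tᵀ hcol]

theorem gwObj_eq_add_sub_cross :
    gwObj C D T = gwObj C 0 T + gwObj 0 D T - 2 * frob (Tᵀ * C) (D * Tᵀ) := by
  simp only [gwObj, frob_transpose_mul_mul_transpose, mul_sum, ← sum_add_distrib,
    ← sum_sub_distrib, Matrix.zero_apply]
  exact sum_congr rfl fun i _ ↦ sum_congr rfl fun j _ ↦ sum_congr rfl fun k _ ↦
    sum_congr rfl fun l _ ↦ by ring

theorem gwObj_eq_frob (hrow : ∀ i, ∑ k, T i k = a i) (hcol : ∀ k, ∑ i, T i k = b k) :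
    gwObj C D T = frob (diagonal a * C) (C * diagonal a) +
      frob (diagonal b * D) (D * diagonal b) - 2 * frob (Tᵀ * C) (D * Tᵀ) := by
  rw [gwObj_eq_add_sub_cross, gwObj_zero_right C T hrow, gwObj_zero_left D T hcol]

end Objective

theorem gw_objective_linear_models_general {ι κ : Type*} [Fintype ι] [Fintype κ] {n m : ℕ}
    (C : ι → Matrix (Fin n) (Fin n) ℝ) (D : κ → Matrix (Fin m) (Fin m) ℝ)
    (u : ι → ℝ) (v : κ → ℝ) {a : Fin n → ℝ} {b : Fin m → ℝ} {T : Matrix (Fin n) (Fin m) ℝ}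
    (hrow : ∀ i, ∑ k, T i k = a i) (hcol : ∀ k, ∑ i, T i k = b k) :
    gwObj (∑ p, u p • C p) (∑ q, v q • D q) T =
      ∑ p, ∑ q, u p * u q * frob (diagonal a * C p) (C q * diagonal a) +
        ∑ p, ∑ q, v p * v q * frob (diagonal b * D p) (D q * diagonal b) -
        2 * ∑ p, ∑ q, u p * v q * frob (Tᵀ * C p) (D q * Tᵀ) := by
  simp only [gwObj_eq_frob _ _ T hrow hcol, frob_mul_sum_smul_sum_smul_mul]

/-- Expansion of the GW objective between two linear models at any coupling. -/
theorem gw_objective_linear_models {N S : ℕ}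
    (Cbar : Fin S → Matrix (Fin N) (Fin N) ℝ) (hsym : ∀ s, (Cbar s).IsSymm)
    (h : Fin N → ℝ) (hh : h ∈ probSimplex N)
    (w1 w2 : Fin S → ℝ) (hw1 : w1 ∈ probSimplex S) (hw2 : w2 ∈ probSimplex S)
    (T : Matrix (Fin N) (Fin N) ℝ) (hT : T ∈ couplings h h) :
    gwObj (∑ s, w1 s • Cbar s) (∑ s, w2 s • Cbar s) T
      = ∑ p, ∑ q, (w1 p * w1 q + w2 p * w2 q) *
          frob (Matrix.diagonal h * Cbar p) (Cbar q * Matrix.diagonal h)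
        - 2 * ∑ p, ∑ q, w1 p * w2 q * frob (Tᵀ * Cbar p) (Cbar q * Tᵀ) := by
  rw [gw_objective_linear_models_general Cbar Cbar w1 w2 hT.2.1 hT.2.2]
  simp only [add_mul, sum_add_distrib]
end

section
/- Let C̄_1, …, C̄_S be symmetric matrices in ℝ^{N×N} and Ā_1, …, Ā_S ∈ ℝ^{N×d} be feature matrices, let h ∈ Σ_N, D_h = diag(h), and α ∈ (0,1). Define M₁ ∈ ℝ^{S×S} by (M₁)_{pq} = ⟨D_h C̄_p, C̄_q D_h⟩_F and M₂ ∈ ℝ^{S×S} by (M₂)_{pq} = ⟨D_h^{1/2} Ā_p, D_h^{1/2} Ā_q⟩_F, and set M_α = α M₁ + (1−α) M₂. Then M_α is positive semi-definite, and for any two embeddings w⁽¹⁾, w⁽²⁾ ∈ Σ_S one has FGW²_{2,α}(C̃(w⁽¹⁾), Ã(w⁽¹⁾), C̃(w⁽²⁾), Ã(w⁽²⁾), h, h) ≤ (w⁽¹⁾ − w⁽²⁾)ᵀ M_α (w⁽¹⁾ − w⁽²⁾), where C̃(w) = ∑_s w_s C̄_s and Ã(w) = ∑_s w_s Ā_s.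 -/
open Matrix BigOperators Finset

/-- The Wasserstein objective with squared Euclidean ground cost. -/
def wassObj {n m d : ℕ} (A1 : Matrix (Fin n) (Fin d) ℝ) (A2 : Matrix (Fin m) (Fin d) ℝ)
    (T : Matrix (Fin n) (Fin m) ℝ) : ℝ :=
  ∑ i, ∑ j, (∑ t, (A1 i t - A2 j t) ^ 2) * T i j

/-- Squared Fused Gromov–Wasserstein distance. -/
noncomputable def FGW2sq {n m d : ℕ} (α : ℝ)
    (C1 : Matrix (Fin n) (Fin n) ℝ) (A1 : Matrix (Fin n) (Fin d) ℝ)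
    (C2 : Matrix (Fin m) (Fin m) ℝ) (A2 : Matrix (Fin m) (Fin d) ℝ)
    (h1 : Fin n → ℝ) (h2 : Fin m → ℝ) : ℝ :=
  sInf ((fun T => (1 - α) * wassObj A1 A2 T + α * gwObj C1 C2 T) '' couplings h1 h2)

/-!
The coupling `diagonal h` transports every node to itself, and `FGW²` is at most its cost. That cost
sees only the differences `C̃(w₁) - C̃(w₂)` and `Ã(w₁) - Ã(w₂)`: it is a convex combination of the
squared Frobenius norms of `D_h^{1/2} (C̃(w₁) - C̃(w₂)) D_h^{1/2}` and `D_h^{1/2} (Ã(w₁) - Ã(w₂))`.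
Both differences are linear in `w₁ - w₂`, so each squared norm is the quadratic form of the Gram
matrix of the weighted atoms, evaluated at `w₁ - w₂`. Cyclicity of the trace identifies the Gram
matrix of the `D_h^{1/2} C̄_s D_h^{1/2}` with `M₁`.
-/

section Gram

variable {ι : Type*} {n m : ℕ}

/-- The Gram matrix of a family of matrices for the Frobenius inner product. -/
def frobGram (X : ι → Matrix (Fin n) (Fin m) ℝ) : Matrix ι ι ℝ :=
  of fun p q => frob (X p) (X q)

theorem frobGram_eq_mul_conjTranspose (X : ι → Matrix (Fin n) (Fin m) ℝ) :
    frobGram X = (of fun p => vec (X p)) * (of fun p => vec (X p))ᴴ := by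
  ext p q
  exact (vec_dotProduct_vec (X p) (X q)).symm

theorem frobGram_posSemidef [Finite ι] (X : ι → Matrix (Fin n) (Fin m) ℝ) :
    (frobGram X).PosSemidef :=
  frobGram_eq_mul_conjTranspose X ▸ posSemidef_self_mul_conjTranspose _

theorem dotProduct_frobGram_mulVec [Fintype ι] (X : ι → Matrix (Fin n) (Fin m) ℝ) (x y : ι → ℝ) :
    x ⬝ᵥ frobGram X *ᵥ y = frob (∑ p, x p • X p) (∑ q, y q • X q) := by
  simp only [dot_mulVec_eq_sum_sum, frobGram, of_apply, frob, transpose_sum, transpose_smul,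
    Matrix.sum_mul, Matrix.mul_sum, trace_sum, Matrix.smul_mul, Matrix.mul_smul, trace_smul,
    smul_eq_mul, Finset.mul_sum]
  refine sum_congr rfl fun q _ => sum_congr rfl fun p _ => ?_
  ring

theorem frob_self (X : Matrix (Fin n) (Fin m) ℝ) : frob X X = ∑ i, ∑ j, X i j ^ 2 := by
  simp only [frob, trace, diag_apply, mul_apply, transpose_apply, ← sq]
  exact sum_comm

end Gram

section WeightedGram

variable {ι : Type*} {N d : ℕ}

/-- The matrix `D_h^{1/2}`. As `√` vanishes on negative reals, it is a square root of
`diagonal h` only for nonnegative `h`. -/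
noncomputable def sqrtDiagonal (h : Fin N → ℝ) : Matrix (Fin N) (Fin N) ℝ :=
  diagonal fun i => √(h i)

/-- The matrix `M₁` of the structure atoms, `(M₁)_{pq} = ⟨D_h C_p, C_q D_h⟩_F`. -/
def structureGram (h : Fin N → ℝ) (C : ι → Matrix (Fin N) (Fin N) ℝ) : Matrix ι ι ℝ :=
  of fun p q => frob (diagonal h * C p) (C q * diagonal h)

/-- The matrix `M₂` of the feature atoms, `(M₂)_{pq} = ⟨D_h^{1/2} A_p, D_h^{1/2} A_q⟩_F`. -/
noncomputable def featureGram (h : Fin N → ℝ) (A : ι → Matrix (Fin N) (Fin d) ℝ) : Matrix ι ι ℝ :=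
  frobGram fun p => sqrtDiagonal h * A p

/-- The matrix `M_α = α M₁ + (1 - α) M₂` of the Mahalanobis distance between embeddings. -/
noncomputable def mahalanobisMatrix (α : ℝ) (h : Fin N → ℝ) (C : ι → Matrix (Fin N) (Fin N) ℝ)
    (A : ι → Matrix (Fin N) (Fin d) ℝ) : Matrix ι ι ℝ :=
  α • structureGram h C + (1 - α) • featureGram h A

theorem sqrtDiagonal_mul_self {h : Fin N → ℝ} (hh : 0 ≤ h) :
    sqrtDiagonal h * sqrtDiagonal h = diagonal h := by
  rw [sqrtDiagonal, diagonal_mul_diagonal]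
  exact congrArg diagonal (funext fun i => Real.mul_self_sqrt (hh i))

theorem structureGram_eq_frobGram {h : Fin N → ℝ} (hh : 0 ≤ h)
    (C : ι → Matrix (Fin N) (Fin N) ℝ) :
    structureGram h C = frobGram fun p => sqrtDiagonal h * C p * sqrtDiagonal h := by
  have hsymm : (sqrtDiagonal h)ᵀ = sqrtDiagonal h := diagonal_transpose _
  ext p q
  simp only [structureGram, frobGram, of_apply, frob, ← sqrtDiagonal_mul_self hh, transpose_mul,
    hsymm]
  set D := sqrtDiagonal h
  calc trace ((C p)ᵀ * (D * D) * (C q * (D * D)))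
      = trace ((C p)ᵀ * D * (D * C q * D) * D) := by simp only [Matrix.mul_assoc]
    _ = trace (D * ((C p)ᵀ * D) * (D * C q * D)) := by
      rw [trace_mul_comm, ← Matrix.mul_assoc]

theorem mahalanobisMatrix_posSemidef [Finite ι] {α : ℝ} (hα : α ∈ Set.Icc 0 1) {h : Fin N → ℝ}
    (hh : 0 ≤ h) (C : ι → Matrix (Fin N) (Fin N) ℝ) (A : ι → Matrix (Fin N) (Fin d) ℝ) :
    (mahalanobisMatrix α h C A).PosSemidef := by
  rw [mahalanobisMatrix, structureGram_eq_frobGram hh]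
  exact ((frobGram_posSemidef _).smul hα.1).add
    ((frobGram_posSemidef _).smul (sub_nonneg.2 hα.2))

variable [Fintype ι]

theorem dotProduct_structureGram_mulVec {h : Fin N → ℝ} (hh : 0 ≤ h)
    (C : ι → Matrix (Fin N) (Fin N) ℝ) (x : ι → ℝ) :
    x ⬝ᵥ structureGram h C *ᵥ x =
      ∑ i, ∑ j, (∑ s, x s • C s) i j ^ 2 * h i * h j := by
  have hsum : ∑ s, x s • (sqrtDiagonal h * C s * sqrtDiagonal h) =
      sqrtDiagonal h * (∑ s, x s • C s) * sqrtDiagonal h := by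
    simp only [Matrix.mul_sum, Matrix.sum_mul, Matrix.mul_smul, Matrix.smul_mul]
  rw [structureGram_eq_frobGram hh, dotProduct_frobGram_mulVec, hsum, frob_self]
  refine sum_congr rfl fun i _ => sum_congr rfl fun j _ => ?_
  rw [sqrtDiagonal, mul_diagonal, diagonal_mul, mul_pow, mul_pow, Real.sq_sqrt (hh i),
    Real.sq_sqrt (hh j)]
  ring

theorem dotProduct_featureGram_mulVec {h : Fin N → ℝ} (hh : 0 ≤ h)
    (A : ι → Matrix (Fin N) (Fin d) ℝ) (x : ι → ℝ) :
    x ⬝ᵥ featureGram h A *ᵥ x = ∑ i, (∑ t, (∑ s, x s • A s) i t ^ 2) * h i := by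
  have hsum : ∑ s, x s • (sqrtDiagonal h * A s) = sqrtDiagonal h * ∑ s, x s • A s := by
    simp only [Matrix.mul_sum, Matrix.mul_smul]
  rw [featureGram, dotProduct_frobGram_mulVec, hsum, frob_self]
  refine sum_congr rfl fun i _ => ?_
  simp only [sqrtDiagonal, diagonal_mul, mul_pow, Real.sq_sqrt (hh i), sum_mul, mul_comm (h i)]

end WeightedGram

section Coupling

variable {n m d : ℕ}

theorem diagonal_mem_couplings {h : Fin n → ℝ} (hh : 0 ≤ h) : diagonal h ∈ couplings h h := by
  refine ⟨fun i j => ?_, fun i => ?_, fun j => ?_⟩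
  · rw [diagonal_apply]
    split_ifs
    exacts [hh i, le_rfl]
  · simp [diagonal_apply]
  · simp [diagonal_apply]

theorem wassObj_nonneg (A1 : Matrix (Fin n) (Fin d) ℝ) (A2 : Matrix (Fin m) (Fin d) ℝ)
    {T : Matrix (Fin n) (Fin m) ℝ} (hT : ∀ i j, 0 ≤ T i j) : 0 ≤ wassObj A1 A2 T :=
  sum_nonneg fun i _ => sum_nonneg fun j _ =>
    mul_nonneg (sum_nonneg fun _ _ => sq_nonneg _) (hT i j)

theorem gwObj_nonneg (C1 : Matrix (Fin n) (Fin n) ℝ) (C2 : Matrix (Fin m) (Fin m) ℝ)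
    {T : Matrix (Fin n) (Fin m) ℝ} (hT : ∀ i j, 0 ≤ T i j) : 0 ≤ gwObj C1 C2 T :=
  sum_nonneg fun i _ => sum_nonneg fun j _ => sum_nonneg fun k _ => sum_nonneg fun l _ =>
    mul_nonneg (mul_nonneg (sq_nonneg _) (hT i k)) (hT j l)

theorem FGW2sq_le_of_mem_couplings {α : ℝ} (hα : α ∈ Set.Icc 0 1)
    (C1 : Matrix (Fin n) (Fin n) ℝ) (A1 : Matrix (Fin n) (Fin d) ℝ)
    (C2 : Matrix (Fin m) (Fin m) ℝ) (A2 : Matrix (Fin m) (Fin d) ℝ)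
    {h1 : Fin n → ℝ} {h2 : Fin m → ℝ} {T : Matrix (Fin n) (Fin m) ℝ} (hT : T ∈ couplings h1 h2) :
    FGW2sq α C1 A1 C2 A2 h1 h2 ≤ (1 - α) * wassObj A1 A2 T + α * gwObj C1 C2 T := by
  refine csInf_le ⟨0, ?_⟩ (Set.mem_image_of_mem _ hT)
  rintro _ ⟨T, ⟨hT, -, -⟩, rfl⟩
  exact add_nonneg (mul_nonneg (sub_nonneg.2 hα.2) (wassObj_nonneg A1 A2 hT))
    (mul_nonneg hα.1 (gwObj_nonneg C1 C2 hT))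

theorem wassObj_diagonal (A1 A2 : Matrix (Fin n) (Fin d) ℝ) (h : Fin n → ℝ) :
    wassObj A1 A2 (diagonal h) = ∑ i, (∑ t, (A1 - A2) i t ^ 2) * h i := by
  simp [wassObj, diagonal_apply]

theorem gwObj_diagonal (C1 C2 : Matrix (Fin n) (Fin n) ℝ) (h : Fin n → ℝ) :
    gwObj C1 C2 (diagonal h) = ∑ i, ∑ j, (C1 - C2) i j ^ 2 * h i * h j := by
  simp [gwObj, diagonal_apply]

end Coupling

section Bound

variable {ι : Type*} [Fintype ι] {N d : ℕ}

theorem dotProduct_mahalanobisMatrix_mulVec_sub (α : ℝ) {h : Fin N → ℝ} (hh : 0 ≤ h)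
    (C : ι → Matrix (Fin N) (Fin N) ℝ) (A : ι → Matrix (Fin N) (Fin d) ℝ) (w1 w2 : ι → ℝ) :
    (w1 - w2) ⬝ᵥ mahalanobisMatrix α h C A *ᵥ (w1 - w2) =
      (1 - α) * wassObj (∑ s, w1 s • A s) (∑ s, w2 s • A s) (diagonal h) +
        α * gwObj (∑ s, w1 s • C s) (∑ s, w2 s • C s) (diagonal h) := by
  have hC : ∑ s, (w1 - w2) s • C s = ∑ s, w1 s • C s - ∑ s, w2 s • C s :=
    map_sub (Fintype.linearCombination ℝ C) w1 w2
  have hA : ∑ s, (w1 - w2) s • A s = ∑ s, w1 s • A s - ∑ s, w2 s • A s :=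
    map_sub (Fintype.linearCombination ℝ A) w1 w2
  rw [wassObj_diagonal, gwObj_diagonal, ← hC, ← hA, ← dotProduct_structureGram_mulVec hh,
    ← dotProduct_featureGram_mulVec hh, mahalanobisMatrix, add_mulVec, smul_mulVec, smul_mulVec,
    dotProduct_add, dotProduct_smul, dotProduct_smul, smul_eq_mul, smul_eq_mul, add_comm]

theorem fgw_mahalanobis_bound_general (C : ι → Matrix (Fin N) (Fin N) ℝ)
    (A : ι → Matrix (Fin N) (Fin d) ℝ) {h : Fin N → ℝ} (hh : 0 ≤ h) {α : ℝ}
    (hα : α ∈ Set.Icc 0 1) (w1 w2 : ι → ℝ) :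
    (mahalanobisMatrix α h C A).PosSemidef ∧
      FGW2sq α (∑ s, w1 s • C s) (∑ s, w1 s • A s) (∑ s, w2 s • C s) (∑ s, w2 s • A s) h h ≤
        (w1 - w2) ⬝ᵥ mahalanobisMatrix α h C A *ᵥ (w1 - w2) := by
  refine ⟨mahalanobisMatrix_posSemidef hα hh C A, ?_⟩
  rw [dotProduct_mahalanobisMatrix_mulVec_sub α hh]
  exact FGW2sq_le_of_mem_couplings hα _ _ _ _ (diagonal_mem_couplings hh)

end Bound

/-- FGW between two embedded labeled graphs is bounded by the Mahalanobis distance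
induced by M_α = α M₁ + (1−α) M₂, which is positive semi-definite. -/
theorem fgw_mahalanobis_bound {N S d : ℕ}
    (Cbar : Fin S → Matrix (Fin N) (Fin N) ℝ) (hsym : ∀ s, (Cbar s).IsSymm)
    (Abar : Fin S → Matrix (Fin N) (Fin d) ℝ)
    (h : Fin N → ℝ) (hh : h ∈ probSimplex N)
    (α : ℝ) (hα : α ∈ Set.Ioo (0 : ℝ) 1)
    (M1 M2 : Matrix (Fin S) (Fin S) ℝ)
    (hM1 : ∀ p q, M1 p q = frob (Matrix.diagonal h * Cbar p) (Cbar q * Matrix.diagonal h))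
    (hM2 : ∀ p q, M2 p q
      = frob (Matrix.diagonal (fun i => Real.sqrt (h i)) * Abar p)
             (Matrix.diagonal (fun i => Real.sqrt (h i)) * Abar q))
    (w1 w2 : Fin S → ℝ) (hw1 : w1 ∈ probSimplex S) (hw2 : w2 ∈ probSimplex S) :
    (∀ x : Fin S → ℝ, 0 ≤ ∑ p, ∑ q, x p * (α * M1 p q + (1 - α) * M2 p q) * x q) ∧
    FGW2sq α (∑ s, w1 s • Cbar s) (∑ s, w1 s • Abar s)
             (∑ s, w2 s • Cbar s) (∑ s, w2 s • Abar s) h h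
      ≤ ∑ p, ∑ q, (w1 p - w2 p) * (α * M1 p q + (1 - α) * M2 p q) * (w1 q - w2 q) := by
  obtain rfl : M1 = structureGram h Cbar := Matrix.ext hM1
  obtain rfl : M2 = featureGram h Abar := Matrix.ext hM2
  obtain ⟨hpsd, hle⟩ :=
    fgw_mahalanobis_bound_general Cbar Abar hh.1 (Set.Ioo_subset_Icc_self hα) w1 w2
  rw [dot_mulVec_eq_sum_sum, sum_comm] at hle
  refine ⟨fun x => (hpsd.dotProduct_mulVec_nonneg x).trans_eq ?_, hle⟩
  exact (dot_mulVec_eq_sum_sum x _ x).trans sum_comm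
end
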